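/- Let $f(x)=\min_{\alpha\in A}(c_\alpha+\alpha\cdot x)$ be a linear tropical polynomial in $n$ variables, that is, $A\subset\mathbb{N}^n$ is finite and nonempty, $c_\alpha\in\mathbb{R}$, and $\sum_j\alpha_j\le 1$ for every $\alpha\in A$. Let $T(f)\subseteq\mathbb{R}^n$ be the set of points at which this minimum is attained by at least two distinct exponents $\alpha\in A$. Let $x,y\in T(f)$ and $\lambda,\mu\in\mathbb{R}$, and define $z\in\mathbb{R}^n$ by $z_j=\min(\lambda+x_j,\mu+y_j)$. Then: 1. The point with coordinates $z_j-\min(\lambda,\mu)$, $1\le j\le n$, belongs to $T(f)$. 2. If $\min(\lambda,\mu)=0$, or if $f$ is homogeneous (that is, $\sum_j\alpha_j=1$ for every $\alpha\in A$), then $z$ itself belongs to $T(f)$. (In other words, every tropical hyperplane is tropically convex: if $x\in\mathbb{R}^n$ is identified with the class of $(0,x)$ in $\mathbb{R}^{n+1}/\mathbb{R}(1,\dots,1)$, then the tropical linear combination of $(0,x)$ and $(0,y)$ with coefficients $\lambda,\mu$ is $(\min(\lambda,\mu),z)$, which represents the point of part 1.) -/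

import Mathlib

/-- The affine-linear function `x ↦ c + α · x` represented by the tropical monomial with
coefficient `c` and exponent vector `α`. -/
def tropTerm {n : ℕ} (c : ℝ) (α : Fin n → ℕ) (x : Fin n → ℝ) : ℝ :=
  c + ∑ j, (α j : ℝ) * x j

/-- The tropical hypersurface of the tropical polynomial with support `A` and coefficients
`c α`, `α ∈ A`: the set of points at which the minimum of the terms is attained by at least
two distinct exponents. -/
def tropHyp {n : ℕ} (A : Finset (Fin n → ℕ)) (c : (Fin n → ℕ) → ℝ) :
    Set (Fin n → ℝ) :=
  {x | ∃ α ∈ A, ∃ β ∈ A, α ≠ β ∧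
    tropTerm (c α) α x = tropTerm (c β) β x ∧
    ∀ γ ∈ A, tropTerm (c α) α x ≤ tropTerm (c γ) γ x}

/-- The tropical linear combination `(l ⊙ x) ⊕ (m ⊙ y)`, computed coordinatewise. -/
noncomputable def tropComb {n : ℕ} (l m : ℝ) (x y : Fin n → ℝ) : Fin n → ℝ :=
  fun j => min (l + x j) (m + y j)

/-!
In homogeneous coordinates, every linear term takes at `(min l m, tropComb l m x y)` the minimum of
its values at `(l, l + x)` and `(m, m + y)`. Tropical vanishing survives such termwise minima: the
indices at which the smaller of the two minima is attained also attain the minimum of both.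
Normalizing the zeroth coordinate to `0` shifts all terms by `min l m`; if the polynomial is already
homogeneous, its hypersurface is invariant under translation along `(1, …, 1)`, so the
normalization can be undone.
-/

/-- The family `u` has a minimum over `s`, attained at two or more distinct indices. For the
values of the terms of a tropical polynomial at a point, this is tropical vanishing. -/
def MinAttainedTwice {ι R : Type*} [LE R] (s : Set ι) (u : ι → R) : Prop :=
  ∃ i ∈ s, ∃ j ∈ s, i ≠ j ∧ u i = u j ∧ ∀ k ∈ s, u i ≤ u k

section MinAttainedTwice

variable {ι R S : Type*} {s : Set ι}

theorem minAttainedTwice_congr [LE R] {u v : ι → R} (h : Set.EqOn u v s) :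
    MinAttainedTwice s u ↔ MinAttainedTwice s v := by
  have transfer {u v : ι → R} (h : Set.EqOn u v s) :
      MinAttainedTwice s u → MinAttainedTwice s v := by
    rintro ⟨i, hi, j, hj, hij, heq, hmin⟩
    refine ⟨i, hi, j, hj, hij, by rw [← h hi, ← h hj, heq], fun k hk => ?_⟩
    rw [← h hi, ← h hk]
    exact hmin k hk
  exact ⟨transfer h, transfer h.symm⟩

theorem minAttainedTwice_comp_iff [LinearOrder R] [Preorder S] {f : R → S} (hf : StrictMono f)
    {u : ι → R} : MinAttainedTwice s (fun i => f (u i)) ↔ MinAttainedTwice s u := by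
  simp only [MinAttainedTwice, hf.injective.eq_iff, hf.le_iff_le]

theorem MinAttainedTwice.pointwise_min [LinearOrder R] {u v : ι → R} (hu : MinAttainedTwice s u)
    (hv : MinAttainedTwice s v) : MinAttainedTwice s (fun i => min (u i) (v i)) := by
  obtain ⟨i, hi, j, hj, hij, hu_eq, hu_min⟩ := hu
  obtain ⟨i', hi', j', hj', hij', hv_eq, hv_min⟩ := hv
  wlog h : u i ≤ v i' generalizing u v i j i' j'
  · simpa only [min_comm (u _)] using
      this i' hi' j' hj' hij' hv_eq hv_min i hi j hj hij hu_eq hu_min (le_of_not_ge h)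
  have le_v : ∀ k ∈ s, u i ≤ v k := fun k hk => h.trans (hv_min k hk)
  have min_i : min (u i) (v i) = u i := min_eq_left (le_v i hi)
  have min_j : min (u j) (v j) = u i := by rw [← hu_eq, min_eq_left (le_v j hj)]
  refine ⟨i, hi, j, hj, hij, min_i.trans min_j.symm, fun k hk => ?_⟩
  exact min_i.trans_le (le_min (hu_min k hk) (le_v k hk))

end MinAttainedTwice

theorem eq_zero_or_eq_single_of_sum_le_one {ι : Type*} [Fintype ι] [DecidableEq ι] {α : ι → ℕ}
    (h : ∑ j, α j ≤ 1) : α = 0 ∨ ∃ i, α = Pi.single i 1 := by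
  have support_subsingleton := Finset.sum_le_one_iff.mp h
  obtain rfl | hα := eq_or_ne α 0
  · exact Or.inl rfl
  obtain ⟨i, hi⟩ := Function.ne_iff.mp hα
  refine Or.inr ⟨i, funext fun j => ?_⟩
  obtain rfl | hji := eq_or_ne j i
  · rw [Pi.single_eq_same]
    exact (support_subsingleton j j (Finset.mem_univ j) (Finset.mem_univ j) hi hi).2
  · rw [Pi.single_eq_of_ne hji]
    by_contra hj
    exact hji (support_subsingleton j i (Finset.mem_univ j) (Finset.mem_univ i) hj hi).1

section TropicalPolynomial

variable {n : ℕ} {A : Finset (Fin n → ℕ)} {c : (Fin n → ℕ) → ℝ} {x y : Fin n → ℝ}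

theorem mem_tropHyp_iff_minAttainedTwice :
    x ∈ tropHyp A c ↔ MinAttainedTwice (A : Set (Fin n → ℕ)) fun α => tropTerm (c α) α x :=
  Iff.rfl

theorem tropTerm_zero (a : ℝ) (x : Fin n → ℝ) : tropTerm a 0 x = a := by
  simp [tropTerm]

theorem tropTerm_single (a : ℝ) (i : Fin n) (x : Fin n → ℝ) :
    tropTerm a (Pi.single i 1) x = a + x i := by
  simp [tropTerm, Pi.single_apply]

theorem tropTerm_sub_const (a : ℝ) (α : Fin n → ℕ) (x : Fin n → ℝ) (t : ℝ) :
    tropTerm a α (fun j => x j - t) = tropTerm a α x - (∑ j, α j : ℕ) * t := by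
  simp only [tropTerm, mul_sub, Finset.sum_sub_distrib, Nat.cast_sum, Finset.sum_mul, add_sub_assoc]

theorem sub_const_mem_tropHyp_iff {d : ℕ} (hd : ∀ α ∈ A, ∑ j, α j = d) (t : ℝ) :
    (fun j => x j - t) ∈ tropHyp A c ↔ x ∈ tropHyp A c := by
  have shift : Set.EqOn (fun α => tropTerm (c α) α fun j => x j - t)
      (fun α => tropTerm (c α) α x - d * t) A := fun α hα => by
    simp only [tropTerm_sub_const, hd α hα]
  exact (minAttainedTwice_congr shift).trans
    (minAttainedTwice_comp_iff fun _ _ h => sub_lt_sub_right h (d * t))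

theorem tropTerm_tropComb_sub_min {α : Fin n → ℕ} (hα : ∑ j, α j ≤ 1) (a l m : ℝ)
    (x y : Fin n → ℝ) :
    tropTerm a α (fun j => tropComb l m x y j - min l m) + min l m =
      min (l + tropTerm a α x) (m + tropTerm a α y) := by
  rcases eq_zero_or_eq_single_of_sum_le_one hα with rfl | ⟨i, rfl⟩
  · rw [tropTerm_zero, tropTerm_zero, tropTerm_zero, min_add_add_right, add_comm]
  · calc tropTerm a (Pi.single i 1) (fun j => tropComb l m x y j - min l m) + min l m
        = a + min (l + x i) (m + y i) := by rw [tropTerm_single, tropComb]; ring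
      _ = min (l + (a + x i)) (m + (a + y i)) := by
        rw [← min_add_add_left, add_left_comm, add_left_comm a m]
      _ = _ := by simp only [tropTerm_single]

theorem tropComb_sub_min_mem_tropHyp (hlin : ∀ α ∈ A, ∑ j, α j ≤ 1) (hx : x ∈ tropHyp A c)
    (hy : y ∈ tropHyp A c) (l m : ℝ) :
    (fun j => tropComb l m x y j - min l m) ∈ tropHyp A c := by
  rw [mem_tropHyp_iff_minAttainedTwice] at hx hy ⊢
  have hmin : MinAttainedTwice (A : Set (Fin n → ℕ))
      fun α => min (l + tropTerm (c α) α x) (m + tropTerm (c α) α y) :=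
    ((minAttainedTwice_comp_iff (add_right_strictMono (a := l))).mpr hx).pointwise_min
      ((minAttainedTwice_comp_iff (add_right_strictMono (a := m))).mpr hy)
  have hterm := (minAttainedTwice_congr fun α hα =>
    tropTerm_tropComb_sub_min (hlin α hα) (c α) l m x y).mpr hmin
  exact (minAttainedTwice_comp_iff (add_left_strictMono (a := min l m))).mp hterm

end TropicalPolynomial

/-- Tropical hyperplanes are tropically convex. A point `x` of `ℝ^n` has homogeneous
coordinates `(0, x)`; the tropical combination of `(0, x)` and `(0, y)` is
`(min l m, tropComb l m x y)`, which represents the point `tropComb l m x y - min l m`.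
If the coordinate with index zero is already normalized, or does not occur in the
polynomial, then `tropComb l m x y` itself lies on the hyperplane. -/
theorem tropical_hyperplane_tropically_convex (n : ℕ)
    (A : Finset (Fin n → ℕ)) (c : (Fin n → ℕ) → ℝ)
    (hA : A.Nonempty) (hlin : ∀ α ∈ A, (∑ j, α j) ≤ 1)
    (x y : Fin n → ℝ) (hx : x ∈ tropHyp A c) (hy : y ∈ tropHyp A c)
    (l m : ℝ) :
    (fun j => tropComb l m x y j - min l m) ∈ tropHyp A c ∧
      (min l m = 0 ∨ (∀ α ∈ A, (∑ j, α j) = 1) → tropComb l m x y ∈ tropHyp A c) := by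
  have hcomb := tropComb_sub_min_mem_tropHyp hlin hx hy l m
  refine ⟨hcomb, ?_⟩
  rintro (hnormalized | hhomogeneous)
  · simpa only [hnormalized, sub_zero] using hcomb
  · exact (sub_const_mem_tropHyp_iff hhomogeneous (min l m)).mp hcomb
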